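/- Let h ≥ 1, k ≥ 3, n > 2k, and let H be a blue cycle on n + h vertices. Then Builder can force a red C_k or a blue cycle of length n or n+1 within h + k + 4 rounds; that is, r̃_H(C_k, {C_n, C_{n+1}}) ≤ h + k + 4. -/

import Mathlib

open SimpleGraph

/-- A board state: the set of red edges and the set of blue edges. -/
abbrev Board : Type := Set (Sym2 ℕ) × Set (Sym2 ℕ)

/-- The set of already colored edges of a board. -/
def Board.colored (B : Board) : Set (Sym2 ℕ) := B.1 ∪ B.2

/-- A Builder strategy selects an edge given the current board. -/
abbrev BuilderStrat : Type := Board → Sym2 ℕ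

/-- A Painter strategy colors the selected edge (true = red, false = blue). -/
abbrev PainterStrat : Type := Board → Sym2 ℕ → Bool

/-- The board after `t` rounds of play from `init`. -/
def playGame (b : BuilderStrat) (p : PainterStrat) (init : Board) : ℕ → Board
  | 0 => init
  | t + 1 =>
      let B := playGame b p init t
      let e := b B
      if p B e then (insert e B.1, B.2) else (B.1, insert e B.2)

/-- Builder's strategy is valid from `init`: along any play it always selects a
previously unselected non-loop edge. -/
def ValidFrom (b : BuilderStrat) (init : Board) : Prop :=
  ∀ p : PainterStrat, ∀ t : ℕ,
    ¬ (b (playGame b p init t)).IsDiag ∧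
      b (playGame b p init t) ∉ (playGame b p init t).colored

/-- Builder can force the winning condition `W` within `t` rounds, starting from `init`. -/
def BuilderWinsIn (init : Board) (W : Board → Prop) (t : ℕ) : Prop :=
  ∃ b : BuilderStrat, ValidFrom b init ∧
    ∀ p : PainterStrat, ∃ s, s ≤ t ∧ W (playGame b p init s)

/-- `G` contains a copy of `H`. -/
def HasCopy {α β : Type} (H : SimpleGraph α) (G : SimpleGraph β) : Prop :=
  ∃ f : α ↪ β, ∀ x y, H.Adj x y → G.Adj (f x) (f y)

/-- The red part of the board contains a copy of `H`. -/
def RedCopy {α : Type} (H : SimpleGraph α) (B : Board) : Prop :=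
  HasCopy H (fromEdgeSet B.1)

/-- The blue part of the board contains a copy of `H`. -/
def BlueCopy {α : Type} (H : SimpleGraph α) (B : Board) : Prop :=
  HasCopy H (fromEdgeSet B.2)

/-- The empty board. -/
def emptyBoard : Board := (∅, ∅)

/-- Winning condition: a red `C_k` or a blue `C_n`. -/
def WinCC (k n : ℕ) (B : Board) : Prop :=
  RedCopy (cycleGraph k) B ∨ BlueCopy (cycleGraph n) B

/-- Winning condition: a red `C_k` or a blue path on `n` vertices. -/
def WinCP (k n : ℕ) (B : Board) : Prop :=
  RedCopy (cycleGraph k) B ∨ BlueCopy (pathGraph n) B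

/-- A board consisting of a single blue cycle on the vertices `0, …, m-1`. -/
def blueCycleBoard (m : ℕ) : Board :=
  (∅, {e | ∃ i : ℕ, i < m ∧ e = s(i, (i + 1) % m)})

/-- A board consisting of a single blue path on the vertices `0, …, m-1`. -/
def bluePathBoard (m : ℕ) : Board :=
  (∅, {e | ∃ i : ℕ, i + 1 < m ∧ e = s(i, i + 1)})

/-!
Builder grows a red path on every other vertex of the blue cycle: he selects the chord joining the
end of the path to the vertex two steps ahead. A red answer lengthens the path, a blue one shortens
the cycle by one. Once the red path has `k` vertices, running from `y` to `b` with `x` next to `b`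
on it, while the cycle still has `n + h` vertices, Builder offers the chord `yb` (red closes a red
`C_k`), then the chord from `y` to the vertex `c` that lies `h` steps further along the cycle (blue
skips `h - 1` vertices and leaves a blue `C_{n+1}`), and finally `cx`: a red `cx` closes a red `C_k`
through `c` in place of `b`, and a blue one yields a blue `C_n` using the two crossing chords `yb`
and `cx`.
-/

namespace Board

/-- The board after the edge `e` has been coloured red. -/
def addRed (B : Board) (e : Sym2 ℕ) : Board := (insert e B.1, B.2)

/-- The board after the edge `e` has been coloured blue. -/
def addBlue (B : Board) (e : Sym2 ℕ) : Board := (B.1, insert e B.2)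

/-- The graph of the red edges of a board. -/
def redGraph (B : Board) : SimpleGraph ℕ := fromEdgeSet B.1

/-- The graph of the blue edges of a board. -/
def blueGraph (B : Board) : SimpleGraph ℕ := fromEdgeSet B.2

variable (B : Board)

@[simp]
theorem blueGraph_addRed (e : Sym2 ℕ) : (B.addRed e).blueGraph = B.blueGraph := rfl

theorem redGraph_le_addRed (e : Sym2 ℕ) : B.redGraph ≤ (B.addRed e).redGraph :=
  fromEdgeSet_mono (Set.subset_insert e B.1)

theorem blueGraph_le_addBlue (e : Sym2 ℕ) : B.blueGraph ≤ (B.addBlue e).blueGraph :=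
  fromEdgeSet_mono (Set.subset_insert e B.2)

theorem addRed_redGraph_adj {u v : ℕ} (huv : u ≠ v) : (B.addRed s(u, v)).redGraph.Adj u v :=
  (fromEdgeSet_adj _).2 ⟨Set.mem_insert _ _, huv⟩

theorem addBlue_blueGraph_adj {u v : ℕ} (huv : u ≠ v) : (B.addBlue s(u, v)).blueGraph.Adj u v :=
  (fromEdgeSet_adj _).2 ⟨Set.mem_insert _ _, huv⟩

theorem colored_addRed (e : Sym2 ℕ) : (B.addRed e).colored = insert e B.colored :=
  Set.insert_union

theorem colored_addBlue (e : Sym2 ℕ) : (B.addBlue e).colored = insert e B.colored :=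
  Set.union_insert

variable {B}

theorem exists_uncolored_edge (hB : B.colored.Finite) :
    ∃ e : Sym2 ℕ, ¬ e.IsDiag ∧ e ∉ B.colored := by
  have hinj : Function.Injective fun i : ℕ => s(0, i + 1) := fun i j hij => by simpa using hij
  obtain ⟨_, ⟨i, rfl⟩, hi⟩ := (Set.infinite_range_of_injective hinj).exists_notMem_finite hB
  exact ⟨_, by simp, hi⟩

end Board

section Game

variable {W : Board → Prop} {B : Board} {t : ℕ}

theorem playGame_succ (b : BuilderStrat) (p : PainterStrat) (init : Board) (t : ℕ) :
    playGame b p init (t + 1) = (playGame b p init t).addRed (b (playGame b p init t)) ∨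
      playGame b p init (t + 1) = (playGame b p init t).addBlue (b (playGame b p init t)) :=
  ite_eq_or_eq ..

theorem playGame_colored_finite (b : BuilderStrat) (p : PainterStrat) (hB : B.colored.Finite)
    (t : ℕ) : (playGame b p B t).colored.Finite := by
  induction t with
  | zero => exact hB
  | succ t ih =>
    rcases playGame_succ b p B t with h | h
    · rw [h, Board.colored_addRed]
      exact ih.insert _
    · rw [h, Board.colored_addBlue]
      exact ih.insert _

theorem BuilderWinsIn.mono {s : ℕ} (hst : s ≤ t) (h : BuilderWinsIn B W s) :
    BuilderWinsIn B W t := by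
  obtain ⟨b, hvalid, hwin⟩ := h
  refine ⟨b, hvalid, fun p => ?_⟩
  obtain ⟨r, hr, hW⟩ := hwin p
  exact ⟨r, hr.trans hst, hW⟩

/-- `Forces W t B`: from the position `B`, Builder can reach `W` within `t` rounds. His choices are
made move by move, whereas a `BuilderStrat` fixes them in advance for all boards. -/
inductive Forces (W : Board → Prop) : ℕ → Board → Prop
  | win {t : ℕ} {B : Board} (hW : W B) : Forces W t B
  | move {t : ℕ} {B : Board} (e : Sym2 ℕ) (hdiag : ¬ e.IsDiag) (hnew : e ∉ B.colored)
      (hred : Forces W t (B.addRed e)) (hblue : Forces W t (B.addBlue e)) : Forces W (t + 1) B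

namespace Forces

theorem mono {s : ℕ} (hst : s ≤ t) (h : Forces W s B) : Forces W t B := by
  induction h generalizing t with
  | win hW => exact win hW
  | move e hdiag hnew _ _ ihr ihb =>
    obtain ⟨t, rfl⟩ := Nat.exists_eq_add_of_le' (Nat.one_le_of_lt hst)
    exact move e hdiag hnew (ihr (by omega)) (ihb (by omega))

/-- A coloured chord may be offered too: the move is then skipped, as the board already is one of
the two it can lead to. -/
theorem chord {u v : ℕ} (huv : u ≠ v) (hred : Forces W t (B.addRed s(u, v)))
    (hblue : Forces W t (B.addBlue s(u, v))) : Forces W (t + 1) B := by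
  by_cases hnew : s(u, v) ∈ B.colored
  · rcases hnew with h | h
    · rw [Board.addRed, Set.insert_eq_of_mem h] at hred
      exact hred.mono t.le_succ
    · rw [Board.addBlue, Set.insert_eq_of_mem h] at hblue
      exact hblue.mono t.le_succ
  · exact move _ (by simpa using huv) hnew hred hblue

/-- A `BuilderStrat` does not know how many rounds are left, so the edge must serve all `t` at once:
take a winning move for the smallest possible `t`. -/
theorem exists_uniform_move (W : Board → Prop) (hB : B.colored.Finite) :
    ∃ e : Sym2 ℕ, (¬ e.IsDiag ∧ e ∉ B.colored) ∧ ∀ t, Forces W (t + 1) B →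
      W B ∨ Forces W t (B.addRed e) ∧ Forces W t (B.addBlue e) := by
  classical
  by_cases hex : ¬ W B ∧ ∃ t, Forces W (t + 1) B
  · obtain ⟨hW, hex⟩ := hex
    rcases Nat.find_spec hex with hW' | ⟨e, hdiag, hnew, hred, hblue⟩
    · exact absurd hW' hW
    · exact ⟨e, ⟨hdiag, hnew⟩, fun t ht => Or.inr
        ⟨hred.mono (Nat.find_min' hex ht), hblue.mono (Nat.find_min' hex ht)⟩⟩
  · obtain ⟨e, he⟩ := B.exists_uncolored_edge hB
    exact ⟨e, he, fun t ht => Or.inl (by_contra fun hW => hex ⟨hW, t, ht⟩)⟩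

theorem builderWinsIn (hB : B.colored.Finite) (h : Forces W t B) : BuilderWinsIn B W t := by
  choose! b hvalid hprogress using fun B : Board => exists_uniform_move (B := B) W
  refine ⟨b, fun p s => hvalid _ (playGame_colored_finite b p hB s), fun p => ?_⟩
  have key : ∀ t s, Forces W t (playGame b p B s) → ∃ r ≤ s + t, W (playGame b p B r) := by
    intro t
    induction t with
    | zero =>
      rintro s ⟨hW⟩
      exact ⟨s, le_rfl, hW⟩
    | succ t ih =>
      intro s hs
      rcases hprogress _ (playGame_colored_finite b p hB s) t hs with hW | ⟨hred, hblue⟩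
      · exact ⟨s, by omega, hW⟩
      · have hnext : Forces W t (playGame b p B (s + 1)) := by
          rcases playGame_succ b p B s with h | h <;> rwa [h]
        obtain ⟨r, hr, hW⟩ := ih (s + 1) hnext
        exact ⟨r, by omega, hW⟩
  simpa using key t 0 h

end Forces

end Game

section EveryOther

variable {V : Type*}

/-- The sublist of the entries of a list at even positions. -/
def everyOther : List V → List V
  | [] => []
  | [a] => [a]
  | a :: _ :: l => a :: everyOther l

theorem everyOther_sublist : ∀ l : List V, (everyOther l).Sublist l
  | [] => .slnil
  | [_] => .refl _
  | _ :: _ :: l => ((everyOther_sublist l).cons _).cons_cons _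

theorem head?_everyOther : ∀ l : List V, (everyOther l).head? = l.head?
  | [] | [_] | _ :: _ :: _ => rfl

theorem length_everyOther : ∀ l : List V, (everyOther l).length = (l.length + 1) / 2
  | [] | [_] => by simp [everyOther]
  | _ :: _ :: l => by
    simp only [everyOther, List.length_cons, length_everyOther l]
    omega

theorem getLast?_everyOther : ∀ {l : List V}, Odd l.length → (everyOther l).getLast? = l.getLast?
  | [_], _ => rfl
  | [_, _], h => absurd h (by simp [parity_simps])
  | _ :: _ :: a :: l, h => by
    have ih := getLast?_everyOther (l := a :: l) (by simpa [parity_simps] using h)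
    cases hl : everyOther (a :: l) <;> simp_all [everyOther, List.getLast?_cons]

end EveryOther

/-- The list `l` enumerates the vertices of a cycle of `G` in cyclic order. An edge counts as a
cycle of length two. -/
structure IsCycleList {V : Type*} (G : SimpleGraph V) (l : List V) : Prop where
  nodup : l.Nodup
  isChain : l.IsChain G.Adj
  adj_getLast_head : ∀ a ∈ l.getLast?, ∀ b ∈ l.head?, G.Adj a b

section CycleList

variable {V : Type*} {G G' : SimpleGraph V} {l l₁ l₂ : List V}

theorem isCycleList_append_iff (h₁ : l₁ ≠ []) (h₂ : l₂ ≠ []) :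
    IsCycleList G (l₁ ++ l₂) ↔ (l₁ ++ l₂).Nodup ∧ l₁.IsChain G.Adj ∧ l₂.IsChain G.Adj ∧
      (∀ a ∈ l₁.getLast?, ∀ b ∈ l₂.head?, G.Adj a b) ∧
      ∀ a ∈ l₂.getLast?, ∀ b ∈ l₁.head?, G.Adj a b := by
  rw [← List.getLast?_append_of_ne_nil l₁ h₂, ← List.head?_append_of_ne_nil l₁ h₁ (l₂ := l₂)]
  constructor
  · rintro ⟨hnodup, hchain, hclose⟩
    obtain ⟨hchain₁, hchain₂, hjoin⟩ := List.isChain_append.1 hchain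
    exact ⟨hnodup, hchain₁, hchain₂, hjoin, hclose⟩
  · rintro ⟨hnodup, hchain₁, hchain₂, hjoin, hclose⟩
    exact ⟨hnodup, List.isChain_append.2 ⟨hchain₁, hchain₂, hjoin⟩, hclose⟩

namespace IsCycleList

theorem mono (hG : G ≤ G') (h : IsCycleList G l) : IsCycleList G' l :=
  ⟨h.nodup, h.isChain.imp fun _ _ hab => hG hab, fun a ha b hb => hG (h.adj_getLast_head a ha b hb)⟩

theorem rotate (h : IsCycleList G (l₁ ++ l₂)) : IsCycleList G (l₂ ++ l₁) := by
  rcases eq_or_ne l₁ [] with rfl | h₁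
  · simpa using h
  rcases eq_or_ne l₂ [] with rfl | h₂
  · simpa using h
  obtain ⟨hnodup, hchain₁, hchain₂, hjoin, hclose⟩ := (isCycleList_append_iff h₁ h₂).1 h
  exact (isCycleList_append_iff h₂ h₁).2
    ⟨List.nodup_append_comm.1 hnodup, hchain₂, hchain₁, hclose, hjoin⟩

theorem of_infix (h : IsCycleList G l) (hl : l₁ <:+: l)
    (hclose : ∀ a ∈ l₁.getLast?, ∀ b ∈ l₁.head?, G.Adj a b) : IsCycleList G l₁ :=
  ⟨h.nodup.sublist hl.sublist, h.isChain.infix hl, hclose⟩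

/-- Two crossing chords join the arcs `l₁` and `l₂`, bypassing the arcs `s` and `t`. -/
theorem crossing {s t : List V} (h : IsCycleList G (l₁ ++ s ++ l₂ ++ t)) (h₁ : l₁ ≠ [])
    (h₂ : l₂ ≠ []) (hlast : ∀ a ∈ l₁.getLast?, ∀ b ∈ l₂.getLast?, G.Adj a b)
    (hhead : ∀ a ∈ l₁.head?, ∀ b ∈ l₂.head?, G.Adj a b) : IsCycleList G (l₁ ++ l₂.reverse) := by
  have hnodup : (l₁ ++ l₂).Nodup := by
    refine h.nodup.sublist (.trans ?_ (List.sublist_append_left _ t))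
    exact (List.sublist_append_left l₁ s).append_right l₂
  have hchain₁ : l₁.IsChain G.Adj := h.isChain.infix ⟨[], s ++ l₂ ++ t, by simp⟩
  have hchain₂ : l₂.IsChain G.Adj := h.isChain.infix ⟨l₁ ++ s, t, rfl⟩
  refine (isCycleList_append_iff h₁ (by simpa using h₂)).2 ⟨?_, hchain₁, ?_, ?_, ?_⟩
  · exact ((List.reverse_perm l₂).append_left l₁).nodup_iff.2 hnodup
  · exact List.isChain_reverse.2 (hchain₂.imp fun _ _ hab => hab.symm)
  · rwa [List.head?_reverse]
  · rw [List.getLast?_reverse]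
    exact fun b hb a ha => (hhead a ha b hb).symm

theorem cons_everyOther {y z : V} (hnodup : (z :: l).Nodup) (hodd : Odd l.length)
    (hchain : (z :: everyOther l).IsChain G.Adj) (hy : l.getLast? = some y) (hyz : G.Adj y z) :
    IsCycleList G (z :: everyOther l) := by
  refine ⟨hnodup.sublist ((everyOther_sublist l).cons_cons z), hchain, ?_⟩
  simpa [List.getLast?_cons, getLast?_everyOther hodd, hy] using hyz

theorem adj_getElem (h : IsCycleList G l) {i j : ℕ} (hi : i < l.length) (hj : j < l.length)
    (hij : j = (i + 1) % l.length) : G.Adj l[i] l[j] := by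
  rcases Nat.lt_or_ge (i + 1) l.length with hlt | hge
  · obtain rfl : j = i + 1 := by rw [hij, Nat.mod_eq_of_lt hlt]
    exact h.isChain.getElem i hlt
  · obtain rfl : i = l.length - 1 := by omega
    obtain rfl : j = 0 := by rw [hij, Nat.sub_add_cancel (by omega), Nat.mod_self]
    refine h.adj_getLast_head _ ?_ _ ?_ <;> simp [List.getLast?_eq_getElem?, List.head?_eq_getElem?]

end IsCycleList

end CycleList

theorem val_eq_add_one_mod_of_cycleGraph_adj {n : ℕ} {u v : Fin n} (huv : (cycleGraph n).Adj u v) :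
    (u : ℕ) = (v + 1) % n ∨ (v : ℕ) = (u + 1) % n := by
  obtain ⟨n, rfl⟩ : ∃ m, n = m + 1 := Nat.exists_eq_succ_of_ne_zero (by have := u.pos; omega)
  have key {a b : Fin (n + 1)} (hab : (a - b).val = 1) : (a : ℕ) = (b + 1) % (n + 1) := by
    simpa only [Fin.val_add, hab] using congrArg Fin.val (add_sub_cancel b a).symm
  exact (cycleGraph_adj'.1 huv).imp key key

section HasCopy

variable {V : Type} {G : SimpleGraph V}

theorem IsCycleList.hasCopy {l : List V} (h : IsCycleList G l) :
    HasCopy (cycleGraph l.length) G := by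
  refine ⟨⟨l.get, h.nodup.injective_get⟩, fun u v huv => ?_⟩
  rcases val_eq_add_one_mod_of_cycleGraph_adj huv with huv | huv
  · exact (h.adj_getElem v.isLt u.isLt huv).symm
  · exact h.adj_getElem u.isLt v.isLt huv

theorem HasCopy.exists_isCycleList {n : ℕ} (hn : 2 ≤ n) (h : HasCopy (cycleGraph n) G) :
    ∃ l, IsCycleList G l ∧ l.length = n := by
  obtain ⟨f, hf⟩ := h
  obtain ⟨m, rfl⟩ := Nat.exists_eq_add_of_le' hn
  refine ⟨List.ofFn f, ⟨List.nodup_ofFn.2 f.injective, ?_, ?_⟩, by simp⟩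
  · rw [List.isChain_ofFn]
    intro i hi
    exact hf _ _ (pathGraph_le_cycleGraph (pathGraph_adj.2 (Or.inl rfl)))
  · have hclose : G.Adj (f (Fin.last _)) (f 0) := hf _ _ (cycleGraph_adj.2 (Or.inr (by simp)))
    rw [List.ofFn_succ, List.head?_cons, ← List.ofFn_succ, List.ofFn_succ', List.concat_eq_append,
      List.getLast?_concat]
    simpa using hclose

end HasCopy

/-- The winning condition of the theorem: a red `C_k`, a blue `C_n` or a blue `C_{n+1}`. -/
def WinTwoCycles (k n : ℕ) (B : Board) : Prop :=
  RedCopy (cycleGraph k) B ∨ BlueCopy (cycleGraph n) B ∨ BlueCopy (cycleGraph (n + 1)) B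

section Strategy

variable {k n t : ℕ} {B : Board}

theorem forces_of_red_cycle {l : List ℕ} (h : IsCycleList B.redGraph l) (hl : l.length = k) :
    Forces (WinTwoCycles k n) t B :=
  .win (Or.inl (hl ▸ h.hasCopy))

theorem forces_of_blue_cycle {l : List ℕ} (h : IsCycleList B.blueGraph l)
    (hl : l.length = n ∨ l.length = n + 1) : Forces (WinTwoCycles k n) t B := by
  rcases hl with rfl | hl
  · exact .win (Or.inr (Or.inl h.hasCopy))
  · exact .win (Or.inr (Or.inr (hl ▸ h.hasCopy)))

theorem forces_of_blue_chord_of_red_chord {b c u x y : ℕ} {C P M : List ℕ}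
    (hblue : IsCycleList B.blueGraph (c :: C ++ b :: u :: P ++ M))
    (hred : (everyOther P).IsChain B.redGraph.Adj) (hx : P.head? = some x)
    (hy : P.getLast? = some y) (hby : B.blueGraph.Adj b y) (hyc : B.redGraph.Adj y c)
    (hP : P.length + 3 = 2 * k) (hlen : C.length + 2 + P.length = n) :
    Forces (WinTwoCycles k n) 1 B := by
  have hnodup : (c :: P).Nodup := hblue.nodup.sublist (by grind)
  have hxP : x ∈ P := List.mem_of_head? hx
  have hcx : c ≠ x := (ne_of_mem_of_not_mem hxP hnodup.notMem).symm
  refine .chord hcx ?red ?blue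
  case red =>
    have hle := B.redGraph_le_addRed s(c, x)
    have hchain : (c :: everyOther P).IsChain (B.addRed s(c, x)).redGraph.Adj := by
      refine .cons (hred.imp fun _ _ h => hle h) ?_
      simpa [head?_everyOther, hx] using B.addRed_redGraph_adj hcx
    refine forces_of_red_cycle (.cons_everyOther hnodup ⟨k - 2, by omega⟩ hchain hy (hle hyc)) ?_
    rw [List.length_cons, length_everyOther]
    omega
  case blue =>
    have hle := B.blueGraph_le_addBlue s(c, x)
    refine forces_of_blue_cycle (l := c :: (C ++ [b]) ++ P.reverse) (.crossing (s := [u]) (t := M)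
      ?_ (by simp) (List.ne_nil_of_mem hxP) ?_ ?_) (.inl ?_)
    · simpa using hblue.mono hle
    · simpa [List.getLast?_cons, hy] using hle hby
    · simpa [hx] using B.addBlue_blueGraph_adj hcx
    · simp only [List.length_append, List.length_cons, List.length_nil, List.length_reverse]
      omega

theorem forces_of_blue_chord {b c u x y : ℕ} {C P M : List ℕ}
    (hblue : IsCycleList B.blueGraph (c :: C ++ b :: u :: P ++ M))
    (hred : (everyOther P).IsChain B.redGraph.Adj) (hx : P.head? = some x)
    (hy : P.getLast? = some y) (hby : B.blueGraph.Adj b y)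
    (hP : P.length + 3 = 2 * k) (hlen : C.length + 2 + P.length = n) :
    Forces (WinTwoCycles k n) 2 B := by
  have hnodup : (c :: P).Nodup := hblue.nodup.sublist (by grind)
  have hyc : y ≠ c := ne_of_mem_of_not_mem (List.mem_of_getLast? hy) hnodup.notMem
  refine .chord hyc ?red ?blue
  case red =>
    exact forces_of_blue_chord_of_red_chord hblue
      (hred.imp fun _ _ h => B.redGraph_le_addRed s(y, c) h) hx hy hby
      (B.addRed_redGraph_adj hyc) hP hlen
  case blue =>
    refine forces_of_blue_cycle (l := c :: C ++ b :: u :: P) ?_ (.inr ?_)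
    · refine (hblue.mono (B.blueGraph_le_addBlue s(y, c))).of_infix ⟨[], M, rfl⟩ ?_
      simpa [List.getLast?_cons, hy] using B.addBlue_blueGraph_adj hyc
    · simp only [List.length_append, List.length_cons]
      omega

theorem forces_of_red_path {h : ℕ} {P Q : List ℕ} (hk : 3 ≤ k) (hn : 2 * k ≤ n + 1)
    (hblue : IsCycleList B.blueGraph (P ++ Q)) (hred : (everyOther P).IsChain B.redGraph.Adj)
    (hlen : P.length + Q.length = n + h + 1) (hP : P.length + 1 = 2 * k) :
    Forces (WinTwoCycles k n) 3 B := by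
  obtain ⟨M, c, C, rfl, hM⟩ : ∃ M c C, Q = M ++ c :: C ∧ M.length = h :=
    ⟨Q.take h, Q[h], Q.drop (h + 1), by simp, List.length_take_of_le (by omega)⟩
  obtain ⟨b, u, x, P, rfl⟩ : ∃ b u x P', P = b :: u :: x :: P' := by
    rcases P with - | ⟨b, - | ⟨u, - | ⟨x, P⟩⟩⟩
    case cons.cons.cons => exact ⟨b, u, x, P, rfl⟩
    all_goals
      simp only [List.length_cons, List.length_nil] at hP
      omega
  obtain ⟨y, hy⟩ : ∃ y, (x :: P).getLast? = some y := ⟨_, List.getLast?_cons⟩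
  simp only [List.length_append, List.length_cons] at hlen hP
  have hrotate : IsCycleList B.blueGraph (c :: C ++ b :: u :: x :: P ++ M) := by
    simpa using IsCycleList.rotate (l₁ := b :: u :: x :: P ++ M) (l₂ := c :: C)
      (by simpa using hblue)
  have hnodup : (b :: x :: P).Nodup := hblue.nodup.sublist (by grind)
  have hyb : y ≠ b := ne_of_mem_of_not_mem (List.mem_of_getLast? hy) hnodup.notMem
  refine .chord hyb ?red ?blue
  case red =>
    have hchain := hred.imp fun _ _ h => B.redGraph_le_addRed s(y, b) h
    refine forces_of_red_cycle (.cons_everyOther hnodup ⟨k - 2, ?_⟩ hchain hy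
      (B.addRed_redGraph_adj hyb)) ?_
    · rw [List.length_cons]
      omega
    · rw [List.length_cons, length_everyOther, List.length_cons]
      omega
  case blue =>
    refine forces_of_blue_chord (hrotate.mono (B.blueGraph_le_addBlue s(y, b))) hred.of_cons
      rfl hy (B.addBlue_blueGraph_adj hyb).symm ?_ ?_ <;> rw [List.length_cons] <;> omega

theorem forces_of_extend_or_shorten {W : Board → Prop} {a b u : ℕ} {P Q : List ℕ}
    (hblue : IsCycleList B.blueGraph (b :: P ++ (Q ++ [a, u])))
    (hred : (everyOther (b :: P)).IsChain B.redGraph.Adj)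
    (extend : ∀ B' : Board, IsCycleList B'.blueGraph (a :: u :: b :: P ++ Q) →
      (everyOther (a :: u :: b :: P)).IsChain B'.redGraph.Adj → Forces W t B')
    (shorten : ∀ B' : Board, IsCycleList B'.blueGraph (b :: P ++ (Q ++ [a])) →
      (everyOther (b :: P)).IsChain B'.redGraph.Adj → Forces W t B') :
    Forces W (t + 1) B := by
  have hab : a ≠ b := by
    have hnodup : [b, a].Nodup := hblue.nodup.sublist (by simp)
    simpa [eq_comm] using hnodup
  refine .chord hab (extend _ ?_ (.cons ?_ ?_)) (shorten _ (.of_infix (l := b :: P ++ (Q ++ [a, u]))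
    ?_ ⟨[], [u], by simp⟩ ?_) hred)
  · simpa using IsCycleList.rotate (l₁ := b :: P ++ Q) (l₂ := [a, u]) (by simpa using hblue)
  · exact hred.imp fun _ _ h => B.redGraph_le_addRed _ h
  · simpa [head?_everyOther] using B.addRed_redGraph_adj hab
  · exact hblue.mono (B.blueGraph_le_addBlue _)
  · simpa [List.getLast?_append, List.getLast?_cons] using B.addBlue_blueGraph_adj hab

/-- `s` counts the vertices still missing from the red path `everyOther P`. -/
theorem forces_of_partial_red_path (hk : 3 ≤ k) (hn : 2 * k ≤ n + 1) (h s : ℕ) {P Q : List ℕ}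
    (hblue : IsCycleList B.blueGraph (P ++ Q)) (hred : (everyOther P).IsChain B.redGraph.Adj)
    (hlen : P.length + Q.length = n + h) (hP : P.length + 2 * s + 1 = 2 * k) :
    Forces (WinTwoCycles k n) (h + s + 2) B := by
  induction h generalizing s P Q B with
  | zero => exact forces_of_blue_cycle hblue (.inl (by simpa using hlen))
  | succ h ihh =>
    induction s generalizing P Q B with
    | zero => exact (forces_of_red_path hk hn hblue hred hlen hP).mono (by omega)
    | succ s ihs =>
      obtain ⟨b, P, rfl⟩ := List.exists_cons_of_length_pos (l := P) (by omega)
      obtain ⟨Q, a, u, rfl⟩ : ∃ Q' a u, Q = Q' ++ [a, u] := by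
        obtain ⟨a, u, hau⟩ := List.length_eq_two.1
          (show (Q.drop (Q.length - 2)).length = 2 by grind)
        exact ⟨Q.take (Q.length - 2), a, u, by rw [← hau, List.take_append_drop]⟩
      simp only [List.length_append, List.length_cons, List.length_nil] at hlen hP
      refine forces_of_extend_or_shorten hblue hred (fun B' hblue' hred' => ?_)
        fun B' hblue' hred' => ?_
      · refine (ihs hblue' hred' ?_ ?_).mono (by omega) <;> simp only [List.length_cons] <;> omega
      · refine (ihh (s + 1) hblue' hred' ?_ ?_).mono (by omega) <;>
          simp only [List.length_append, List.length_cons, List.length_nil] <;> omega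

end Strategy

theorem blueCycleBoard_colored_finite (m : ℕ) : (blueCycleBoard m).colored.Finite := by
  refine ((Set.finite_lt_nat m).image fun i => s(i, (i + 1) % m)).subset ?_
  rintro e (he | ⟨i, hi, rfl⟩)
  · exact he.elim
  · exact ⟨i, hi, rfl⟩

theorem blueCopy_blueCycleBoard (m : ℕ) : BlueCopy (cycleGraph m) (blueCycleBoard m) := by
  refine ⟨Fin.valEmbedding, fun u v huv => ?_⟩
  refine (fromEdgeSet_adj _).2 ⟨?_, Fin.val_ne_of_ne huv.ne⟩
  rcases val_eq_add_one_mod_of_cycleGraph_adj huv with h | h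
  · exact ⟨v, v.isLt, Sym2.eq_swap.trans (by simp [h])⟩
  · exact ⟨u, u.isLt, by simp [h]⟩

theorem shorten_blue_cycle_by_Ok_general {k n h : ℕ} (hk : 3 ≤ k) (hn : 2 * k ≤ n + 1) {B : Board}
    (hB : B.colored.Finite) (hcycle : BlueCopy (cycleGraph (n + h)) B) :
    BuilderWinsIn B (WinTwoCycles k n) (h + k + 1) := by
  obtain ⟨l, hl, hlen⟩ := hcycle.exists_isCycleList (by omega)
  obtain ⟨v, Q, rfl⟩ := List.exists_cons_of_length_pos (l := l) (by omega)
  rw [List.length_cons] at hlen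
  have hforces : Forces (WinTwoCycles k n) (h + (k - 1) + 2) B :=
    forces_of_partial_red_path hk hn h (k - 1) (P := [v]) (Q := Q) hl (.singleton v)
      (by rw [List.length_singleton]; omega) (by rw [List.length_singleton]; omega)
  exact (hforces.mono (by omega)).builderWinsIn hB

/-- If `h ≥ 1`, `k ≥ 3`, `n > 2k` and the board contains a blue cycle on `n + h`
vertices, then `r̃_H(C_k, {C_n, C_{n+1}}) ≤ h + k + 4`. -/
theorem shorten_blue_cycle_by_Ok (k n h : ℕ) (hh : 1 ≤ h) (hk : 3 ≤ k)
    (hn : 2 * k < n) :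
    BuilderWinsIn (blueCycleBoard (n + h))
      (fun B => RedCopy (SimpleGraph.cycleGraph k) B ∨
        BlueCopy (SimpleGraph.cycleGraph n) B ∨
        BlueCopy (SimpleGraph.cycleGraph (n + 1)) B)
      (h + k + 4) := by
  exact (shorten_blue_cycle_by_Ok_general hk (by omega) (blueCycleBoard_colored_finite _)
    (blueCopy_blueCycleBoard _)).mono (by omega)
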